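/- For |q|<1, (G(q)^2·H(q^2) − G(q^2)·H(q)^2) / (G(q)^2·H(q^2) + G(q^2)·H(q)^2) = q·H(q)·H(q^2)^2 / (G(q)·G(q^2)^2). -/

import Mathlib

/-!
Write `θ(a) = (a; p)_∞ (p/a; p)_∞` with `p = q ^ 10`, and `t i = θ(q ^ i)`, so that `t (10 - i) = t i`.
Splitting base-`q ^ 5` products by the parity of the index gives
`G(q) = 1 / (t 1 * t 4)`, `H(q) = 1 / (t 2 * t 3)`, `G(q ^ 2) = 1 / t 2`, `H(q ^ 2) = 1 / t 4`.

By the Jacobi triple product (`jacobi_triple`, the limit of the finite form `finite_jtp` of the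
`q`-binomial theorem), `θ` is, up to the constant `(p; p)_∞`, the theta series `Th`.
Multiplying two such series and sorting the terms by the parity of `m + n` gives (`Th_mul`)
`Th (x * y) * Th (x / y) = x * (P x * F y - F x * P y)`,
a 2 × 2 determinant in the vectors `(P x, F x)` and `(P y, F y)`. The Plücker relation between the
determinants `D i j = P (q ^ i) * F (q ^ j) - F (q ^ i) * P (q ^ j)` is then Weierstrass' three-term
relation for `θ`. Its instances at the indices `4, 2, 1, 0` and `4, 3, 2, 0` are
`t 5 * t 2 ^ 2 * t 3 = t 1 * t 4 * (t 3 * t 4 + q * t 1 * t 2)` and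
`t 5 * t 1 * t 4 ^ 2 = t 2 * t 3 * (t 3 * t 4 - q * t 1 * t 2)`.
These evaluate the numerator and the denominator of the left-hand side separately as products of
the `t i`; in particular the denominator does not vanish.
-/

noncomputable def qp (a q : ℂ) : ℂ := ∏' k : ℕ, (1 - a * q ^ k)

noncomputable def GG (q : ℂ) : ℂ := 1 / (qp q (q ^ 5) * qp (q ^ 4) (q ^ 5))

noncomputable def HH (q : ℂ) : ℂ := 1 / (qp (q ^ 2) (q ^ 5) * qp (q ^ 3) (q ^ 5))

noncomputable def RR (q : ℂ) : ℂ :=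
  (qp q (q ^ 5) * qp (q ^ 4) (q ^ 5)) / (qp (q ^ 2) (q ^ 5) * qp (q ^ 3) (q ^ 5))

noncomputable def phi (q : ℂ) : ℂ := ∑' n : ℤ, q ^ (n.natAbs ^ 2)

noncomputable def psi (q : ℂ) : ℂ := ∑' n : ℕ, q ^ (n * (n + 1) / 2)

open Filter Topology Finset

/-! ### Convergence of the products and theta series -/

theorem summable_quad (r a : ℂ) (hr0 : r ≠ 0) (hr : ‖r‖ < 1) (ha : a ≠ 0) :
    Summable fun n : ℤ => r ^ (n * n) * a ^ n := by
  have key : ∀ b : ℂ, b ≠ 0 → Summable fun n : ℕ => r ^ (n * n) * b ^ n := by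
    intro b hb
    refine summable_of_ratio_test_tendsto_lt_one (l := 0) one_pos
      (Eventually.of_forall fun n => by positivity) ?_
    have h : Tendsto (fun n : ℕ => ‖r * b‖ * (‖r ^ 2‖) ^ n) atTop (𝓝 (‖r * b‖ * 0)) :=
      (tendsto_pow_atTop_nhds_zero_of_lt_one (norm_nonneg _) (by
        rw [norm_pow]; exact pow_lt_one₀ (norm_nonneg _) hr two_ne_zero)).const_mul _
    rw [mul_zero] at h
    refine h.congr fun n => ?_
    rw [← norm_pow, ← norm_mul, ← norm_div]
    congr 1
    field_simp
    ring
  refine Summable.of_nat_of_neg ?_ ?_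
  · refine (key a ha).congr fun n => ?_
    norm_cast
  · refine (key a⁻¹ (inv_ne_zero ha)).congr fun n => ?_
    rw [neg_mul_neg, zpow_neg, inv_pow]
    norm_cast

theorem summable_pow_mul (a p : ℂ) (hp : ‖p‖ < 1) : Summable fun k : ℕ => ‖-(a * p ^ k)‖ := by
  simp only [norm_neg, norm_mul, norm_pow]
  exact (summable_geometric_of_lt_one (norm_nonneg _) hp).mul_left _

theorem qp_multipliable (a p : ℂ) (hp : ‖p‖ < 1) : Multipliable fun k : ℕ => (1 - a * p ^ k) := by
  simp only [sub_eq_add_neg]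
  exact multipliable_one_add_of_summable (summable_pow_mul a p hp)

theorem qp_tendsto (a p : ℂ) (hp : ‖p‖ < 1) :
    Tendsto (fun n : ℕ => ∏ k ∈ range n, (1 - a * p ^ k)) atTop (𝓝 (qp a p)) :=
  (qp_multipliable a p hp).hasProd.tendsto_prod_nat

theorem one_sub_ne_zero {a p : ℂ} (hp : ‖p‖ < 1) (ha : ‖a‖ < 1) (k : ℕ) : 1 - a * p ^ k ≠ 0 := by
  intro h
  have h1 : ‖a * p ^ k‖ < 1 := by
    rw [norm_mul, norm_pow]
    exact mul_lt_one_of_nonneg_of_lt_one_left (norm_nonneg _) ha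
      (pow_le_one₀ (norm_nonneg _) hp.le)
  rw [← sub_eq_zero.mp h] at h1
  simp at h1

theorem qp_ne_zero {a p : ℂ} (hp : ‖p‖ < 1) (ha : ‖a‖ < 1) : qp a p ≠ 0 := by
  have := tprod_one_add_ne_zero_of_summable (f := fun k : ℕ => -(a * p ^ k))
    (fun k => by rw [← sub_eq_add_neg]; exact one_sub_ne_zero hp ha k) (summable_pow_mul a p hp)
  simpa only [qp, sub_eq_add_neg] using this

/-- Separates the even and odd indices of the product. -/
theorem qp_split (a p : ℂ) (hp : ‖p‖ < 1) : qp a p = qp a (p ^ 2) * qp (a * p) (p ^ 2) := by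
  have hp2 : ‖p ^ 2‖ < 1 := by
    rw [norm_pow]; exact pow_lt_one₀ (norm_nonneg _) hp two_ne_zero
  have e1 : ∀ k : ℕ, 1 - a * p ^ (2 * k) = 1 - a * (p ^ 2) ^ k := fun k => by rw [pow_mul]
  have e2 : ∀ k : ℕ, 1 - a * p ^ (2 * k + 1) = 1 - a * p * (p ^ 2) ^ k := fun k => by
    rw [pow_succ, pow_mul]; ring
  have := tprod_even_mul_odd (f := fun k : ℕ => 1 - a * p ^ k)
    (by simpa only [e1] using qp_multipliable a (p ^ 2) hp2)
    (by simpa only [e2] using qp_multipliable (a * p) (p ^ 2) hp2)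
  simp only [e1, e2] at this
  exact this.symm

/-! ### The finite Jacobi triple product -/

/-- The Gaussian binomial coefficient `[n choose j]` at `p`, by the `q`-Pascal recursion; it is `0`
for `n < j`, so that the truncated `n - j` in the exponent is harmless. -/
noncomputable def gb (p : ℂ) : ℕ → ℕ → ℂ
  | _, 0 => 1
  | 0, _ + 1 => 0
  | n + 1, j + 1 => gb p n (j + 1) + p ^ (n - j) * gb p n j

theorem gb_zero (p : ℂ) (n : ℕ) : gb p n 0 = 1 := by cases n <;> simp [gb]

theorem gb_eq_zero (p : ℂ) : ∀ n j : ℕ, n < j → gb p n j = 0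
  | _, 0, h => by simp at h
  | 0, _ + 1, _ => by simp [gb]
  | n + 1, j + 1, h => by
    rw [gb, gb_eq_zero p n (j + 1) (by lia), gb_eq_zero p n j (by lia)]; simp

/-- The finite product `(p; p)_n = (1 - p) (1 - p ^ 2) ⋯ (1 - p ^ n)`. -/
noncomputable def qfac (p : ℂ) (n : ℕ) : ℂ := ∏ k ∈ range n, (1 - p * p ^ k)

theorem qfac_succ (p : ℂ) (n : ℕ) : qfac p (n + 1) = qfac p n * (1 - p ^ (n + 1)) := by
  rw [qfac, prod_range_succ, pow_succ' p n]; rfl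

/-- The closed form of the Gaussian binomial coefficient, cleared of denominators. -/
theorem gb_mul_qfac (p : ℂ) : ∀ j i : ℕ, gb p (j + i) j * (qfac p j * qfac p i) = qfac p (j + i)
  | 0, i => by simp [gb_zero, qfac]
  | j + 1, 0 => by
    have := gb_mul_qfac p j 0
    rw [add_zero] at this ⊢
    rw [gb, gb_eq_zero p j (j + 1) (by lia), qfac_succ, Nat.sub_self]
    linear_combination (1 - p ^ (j + 1)) * this
  | j + 1, i + 1 => by
    have h1 := gb_mul_qfac p j (i + 1)
    have h2 := gb_mul_qfac p (j + 1) i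
    rw [show j + 1 + i = j + (i + 1) by ring, qfac_succ p j] at h2
    rw [qfac_succ p i] at h1
    rw [show j + 1 + (i + 1) = j + (i + 1) + 1 by ring, gb, qfac_succ p j, qfac_succ p i,
      qfac_succ p (j + (i + 1)), show j + (i + 1) - j = i + 1 by lia]
    linear_combination (1 - p ^ (i + 1)) * h2 + p ^ (i + 1) * (1 - p ^ (j + 1)) * h1

/-- The `q`-binomial theorem at base `p = r ^ 2`. Working with `r` turns the exponent `j (j - 1) / 2`
of `p` into the integer `j * j - j` without division. -/
theorem q_binomial (r z : ℂ) (hr0 : r ≠ 0) (n : ℕ) :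
    ∏ k ∈ range n, (1 + z * (r ^ 2) ^ k) =
      ∑ j ∈ range (n + 1), gb (r ^ 2) n j * r ^ ((j : ℤ) * j - j) * z ^ j := by
  induction n with
  | zero => simp [gb]
  | succ n ih =>
    rw [prod_range_succ, ih, sum_range_succ' _ (n + 1), mul_add, mul_one, sum_mul]
    have h1 : ∑ j ∈ range (n + 1), gb (r ^ 2) n j * r ^ ((j : ℤ) * j - j) * z ^ j =
        ∑ j ∈ range (n + 1), gb (r ^ 2) n (j + 1) *
          r ^ (((j + 1 : ℕ) : ℤ) * (j + 1 : ℕ) - (j + 1 : ℕ)) * z ^ (j + 1) + 1 := by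
      rw [sum_range_succ', sum_range_succ _ n, gb_eq_zero (r ^ 2) n (n + 1) (by lia)]
      simp [gb_zero]
    rw [h1, add_right_comm, ← sum_add_distrib]
    congr 1
    · refine sum_congr rfl fun j hj => ?_
      have hj : j ≤ n := by simpa [Nat.lt_succ_iff] using hj
      rw [gb]
      have e : r ^ (((j + 1 : ℕ) : ℤ) * (j + 1 : ℕ) - (j + 1 : ℕ)) * (r ^ 2) ^ (n - j) =
          r ^ ((j : ℤ) * j - j) * (r ^ 2) ^ n := by
        rw [← pow_mul, ← pow_mul, ← zpow_natCast r, ← zpow_natCast r, ← zpow_add₀ hr0,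
          ← zpow_add₀ hr0]
        congr 1
        push_cast [hj]
        ring
      linear_combination (-(gb (r ^ 2) n j * z ^ (j + 1))) * e
    · simp [gb_zero]

/-- The `q`-binomial theorem for `2 n` factors at `z = -a / p ^ n`, divided by its lowest term. -/
theorem finite_jtp (r a : ℂ) (hr0 : r ≠ 0) (ha : a ≠ 0) (n : ℕ) :
    (∏ k ∈ range n, (1 - a * (r ^ 2) ^ k)) * ∏ k ∈ range n, (1 - r ^ 2 / a * (r ^ 2) ^ k) =
      ∑ j ∈ range (2 * n + 1), gb (r ^ 2) (2 * n) j *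
        (r ^ (((j : ℤ) - n) * ((j : ℤ) - n) - ((j : ℤ) - n)) * (-a) ^ ((j : ℤ) - n)) := by
  have ha' : -a ≠ 0 := neg_ne_zero.mpr ha
  have h := q_binomial r (-a * r ^ (-(2 * n : ℤ))) hr0 (2 * n)
  -- The first `n` factors, read backwards, are the factors in `1 / a` up to a monomial.
  have hA : ∏ k ∈ range n, (1 + -a * r ^ (-(2 * n : ℤ)) * (r ^ 2) ^ k) =
      ((-a) ^ n * r ^ (-((n : ℤ) * n + n))) * ∏ k ∈ range n, (1 - r ^ 2 / a * (r ^ 2) ^ k) := by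
    have hC : ∀ n : ℕ, ∏ k ∈ range n, (-a * r ^ (-(2 * (k : ℤ) + 2))) =
        (-a) ^ n * r ^ (-((n : ℤ) * n + n)) := by
      intro n
      induction n with
      | zero => simp
      | succ n ih =>
        have e : r ^ (-(((n + 1 : ℕ) : ℤ) * (n + 1 : ℕ) + (n + 1 : ℕ))) =
            r ^ (-((n : ℤ) * n + n)) * r ^ (-(2 * (n : ℤ) + 2)) := by
          rw [← zpow_add₀ hr0]; congr 1; push_cast; ring
        rw [prod_range_succ, ih, e]; ring
    rw [← hC, ← prod_mul_distrib, ← prod_range_reflect]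
    refine prod_congr rfl fun k hk => ?_
    have hk : k + 1 ≤ n := by simpa using hk
    have e1 : r ^ (-(2 * n : ℤ)) * (r ^ 2) ^ (n - 1 - k) = r ^ (-(2 * (k : ℤ) + 2)) := by
      rw [← pow_mul, ← zpow_natCast r, ← zpow_add₀ hr0, Nat.sub_sub]
      congr 1
      push_cast [show 1 + k ≤ n by lia]
      ring
    have e2 : r ^ (-(2 * (k : ℤ) + 2)) * (r ^ 2 * (r ^ 2) ^ k) = 1 := by
      rw [← pow_succ', ← pow_mul, ← zpow_natCast r, ← zpow_add₀ hr0]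
      convert zpow_zero r using 2
      push_cast; ring
    rw [mul_assoc, e1]
    field_simp
    linear_combination (-1 : ℂ) * e2
  have hB : ∏ k ∈ range n, (1 + -a * r ^ (-(2 * n : ℤ)) * (r ^ 2) ^ (n + k)) =
      ∏ k ∈ range n, (1 - a * (r ^ 2) ^ k) := by
    refine prod_congr rfl fun k _ => ?_
    have e1 : r ^ (-(2 * n : ℤ)) * (r ^ 2) ^ (n + k) = (r ^ 2) ^ k := by
      rw [← pow_mul, ← pow_mul, ← zpow_natCast r, ← zpow_natCast r, ← zpow_add₀ hr0]
      congr 1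
      push_cast; ring
    linear_combination (-a) * e1
  have hne : (-a) ^ n * r ^ (-((n : ℤ) * n + n)) ≠ 0 :=
    mul_ne_zero (pow_ne_zero _ ha') (zpow_ne_zero _ hr0)
  rw [two_mul, prod_range_add, hA, hB, ← two_mul] at h
  apply mul_left_cancel₀ hne
  rw [show ∀ x y z : ℂ, x * (y * z) = x * z * y by intros; ring, h, mul_sum]
  refine sum_congr rfl fun j _ => ?_
  have e1 : r ^ ((j : ℤ) * j - j) * (r ^ (-(2 * n : ℤ))) ^ j = r ^ (-((n : ℤ) * n + n)) *
      r ^ (((j : ℤ) - n) * ((j : ℤ) - n) - ((j : ℤ) - n)) := by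
    rw [← zpow_natCast, ← zpow_mul, ← zpow_add₀ hr0, ← zpow_add₀ hr0]
    congr 1; ring
  have e2 : (-a) ^ n * (-a) ^ ((j : ℤ) - n) = (-a) ^ j := by
    rw [← zpow_natCast, ← zpow_add₀ ha', ← zpow_natCast]
    congr 1; ring
  rw [mul_pow, ← e2]
  linear_combination (gb (r ^ 2) (2 * n) j * (-a) ^ n * (-a) ^ ((j : ℤ) - n)) * e1

/-! ### The Jacobi triple product -/

/-- The theta series `∑ (-1) ^ n p ^ (n (n - 1) / 2) a ^ n` over the integers, with `p = r ^ 2`. -/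
noncomputable def Th (r a : ℂ) : ℂ := ∑' n : ℤ, r ^ (n * n - n) * (-a) ^ n

theorem summable_Th (r a : ℂ) (hr0 : r ≠ 0) (hr : ‖r‖ < 1) (ha : a ≠ 0) :
    Summable fun n : ℤ => r ^ (n * n - n) * (-a) ^ n := by
  refine (summable_quad r (-a / r) hr0 hr (div_ne_zero (neg_ne_zero.mpr ha) hr0)).congr fun n => ?_
  rw [zpow_sub₀ hr0, div_zpow]; ring

theorem norm_sq_lt_one {r : ℂ} (hr : ‖r‖ < 1) : ‖r ^ 2‖ < 1 := by
  rw [norm_pow]; exact pow_lt_one₀ (norm_nonneg _) hr two_ne_zero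

/-- Tannery's theorem applied to `finite_jtp`: the Gaussian binomials are bounded, because
`(p; p)_n` converges to a nonzero limit, and tend to `1 / (p; p)_∞`. -/
theorem jacobi_triple (r a : ℂ) (hr0 : r ≠ 0) (hr : ‖r‖ < 1) (ha : a ≠ 0) :
    Th r a = qp (r ^ 2) (r ^ 2) * (qp a (r ^ 2) * qp (r ^ 2 / a) (r ^ 2)) := by
  have hp := norm_sq_lt_one hr
  set p := r ^ 2 with hpdef
  set L := qp p p with hL
  have hL0 : L ≠ 0 := qp_ne_zero hp hp
  have hQ : Tendsto (qfac p) atTop (𝓝 L) := qp_tendsto p p hp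
  have hQ0 : ∀ n, qfac p n ≠ 0 := fun n =>
    prod_ne_zero_iff.mpr fun k _ => one_sub_ne_zero hp hp k
  obtain ⟨A, hA⟩ := (Metric.isBounded_range_of_tendsto _ hQ).exists_norm_le
  obtain ⟨B, hB⟩ := (Metric.isBounded_range_of_tendsto _ (hQ.inv₀ hL0)).exists_norm_le
  replace hA : ∀ n, ‖qfac p n‖ ≤ A := fun n => hA _ ⟨n, rfl⟩
  replace hB : ∀ n, ‖(qfac p n)⁻¹‖ ≤ B := fun n => hB _ ⟨n, rfl⟩
  have hA0 : 0 ≤ A := (norm_nonneg _).trans (hA 0)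
  have hB0 : 0 ≤ B := (norm_nonneg _).trans (hB 0)
  have hgb : ∀ j i : ℕ, gb p (j + i) j = qfac p (j + i) * ((qfac p j)⁻¹ * (qfac p i)⁻¹) := by
    intro j i
    rw [← gb_mul_qfac p j i]
    field_simp [hQ0 j, hQ0 i]
  set t : ℤ → ℂ := fun n => r ^ (n * n - n) * (-a) ^ n with ht
  have hts : Summable t := summable_Th r a hr0 hr ha
  -- The coefficients of `finite_jtp`, reindexed by `j - n` and extended by zero to all integers.
  let c : ℕ → ℤ → ℂ := fun n j =>
    if -(n : ℤ) ≤ j ∧ j ≤ n then gb p (2 * n) (j + n).toNat else 0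
  have hc : ∀ (n : ℕ) (j : ℤ), -(n : ℤ) ≤ j ∧ j ≤ n → c n j =
      qfac p (2 * n) * ((qfac p (n + j).toNat)⁻¹ * (qfac p (n - j).toNat)⁻¹) := by
    intro n j h
    simp only [c, if_pos h]
    have := hgb (n + j).toNat (n - j).toNat
    rw [show (n + j).toNat + (n - j).toNat = 2 * n by lia] at this
    rw [← this, add_comm]
  have hcb : ∀ n j, ‖c n j‖ ≤ A * (B * B) := by
    intro n j
    by_cases h : -(n : ℤ) ≤ j ∧ j ≤ n
    · rw [hc n j h, norm_mul, norm_mul]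
      gcongr
      exacts [hA _, hB _, hB _]
    · simp only [c, if_neg h, norm_zero]; positivity
  have hct : ∀ j, Tendsto (fun n => c n j) atTop (𝓝 L⁻¹) := by
    intro j
    have h1 : Tendsto (fun n : ℕ => 2 * n) atTop atTop :=
      tendsto_id.const_mul_atTop' two_pos
    have h2 : Tendsto (fun n : ℕ => (n + j).toNat) atTop atTop :=
      tendsto_atTop.mpr fun b => (eventually_ge_atTop (b + j.natAbs)).mono fun n hn => by lia
    have h3 : Tendsto (fun n : ℕ => (n - j).toNat) atTop atTop :=
      tendsto_atTop.mpr fun b => (eventually_ge_atTop (b + j.natAbs)).mono fun n hn => by lia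
    have := (hQ.comp h1).mul (((hQ.comp h2).inv₀ hL0).mul ((hQ.comp h3).inv₀ hL0))
    rw [show L * (L⁻¹ * L⁻¹) = L⁻¹ by field_simp] at this
    refine this.congr' ?_
    filter_upwards [eventually_ge_atTop j.natAbs] with n hn
    rw [hc n j (by lia)]
    rfl
  have hlim : Tendsto (fun n => ∑' j, c n j * t j) atTop (𝓝 (∑' j, L⁻¹ * t j)) := by
    refine tendsto_tsum_of_dominated_convergence (bound := fun j => A * (B * B) * ‖t j‖)
      (hts.norm.mul_left _) (fun j => (hct j).mul_const _) (Eventually.of_forall fun n j => ?_)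
    rw [norm_mul]
    gcongr
    exact hcb n j
  have hfin : ∀ n : ℕ, ∑' j, c n j * t j =
      (∏ k ∈ range n, (1 - a * p ^ k)) * ∏ k ∈ range n, (1 - p / a * p ^ k) := by
    intro n
    rw [hpdef, finite_jtp r a hr0 ha n]
    have hinj : Function.Injective fun j : ℕ => (j : ℤ) - n := fun x y h => by simpa using h
    rw [← hinj.tsum_eq, tsum_eq_sum (s := range (2 * n + 1))]
    · refine sum_congr rfl fun j hj => ?_
      have hj : j < 2 * n + 1 := by simpa using hj
      simp only [c, ht]
      rw [if_pos (by lia)]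
      congr 2
      lia
    · intro j hj
      have hj : ¬ j < 2 * n + 1 := by simpa using hj
      simp only [c]
      rw [if_neg (by lia), zero_mul]
    · intro j hj
      have hj : -(n : ℤ) ≤ j ∧ j ≤ n := by
        by_contra h
        exact hj (by simp only [c, if_neg h, zero_mul])
      exact ⟨(j + n).toNat, by simp only; lia⟩
  simp only [hfin] at hlim
  have huniq := tendsto_nhds_unique hlim ((qp_tendsto a p hp).mul (qp_tendsto (p / a) p hp))
  rw [tsum_mul_left] at huniq
  rw [← huniq, mul_inv_cancel_left₀ hL0]
  rfl

/-! ### A product of two theta series as a determinant -/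

/-- The series `∑ p ^ (k ^ 2) x ^ (2 k)`, with `p = r ^ 2`. -/
noncomputable def FF (r x : ℂ) : ℂ := ∑' k : ℤ, r ^ (2 * (k * k)) * x ^ (2 * k)

/-- The series `∑ p ^ (k ^ 2 + k) x ^ (2 k + 1)`, with `p = r ^ 2`. -/
noncomputable def PP (r x : ℂ) : ℂ := ∑' k : ℤ, r ^ (2 * (k * k) + 2 * k) * x ^ (2 * k + 1)

theorem summable_FF (r x : ℂ) (hr0 : r ≠ 0) (hr : ‖r‖ < 1) (hx : x ≠ 0) :
    Summable fun k : ℤ => r ^ (2 * (k * k)) * x ^ (2 * k) := by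
  refine (summable_quad (r ^ 2) (x ^ 2) (pow_ne_zero _ hr0) (norm_sq_lt_one hr)
    (pow_ne_zero _ hx)).congr fun k => ?_
  rw [zpow_mul r, zpow_mul x]; simp only [zpow_ofNat]

theorem summable_PP (r x : ℂ) (hr0 : r ≠ 0) (hr : ‖r‖ < 1) (hx : x ≠ 0) :
    Summable fun k : ℤ => r ^ (2 * (k * k) + 2 * k) * x ^ (2 * k + 1) := by
  refine ((summable_quad (r ^ 2) (r ^ 2 * x ^ 2) (pow_ne_zero _ hr0) (norm_sq_lt_one hr)
    (mul_ne_zero (pow_ne_zero _ hr0) (pow_ne_zero _ hx))).mul_left x).congr fun k => ?_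
  rw [zpow_add₀ hr0, zpow_add₀ hx, zpow_mul r, zpow_mul r, zpow_mul x, zpow_one, mul_zpow]
  simp only [zpow_ofNat]
  ring

theorem PP_shift (r x : ℂ) (hx : x ≠ 0) :
    ∑' k : ℤ, r ^ (2 * (k * k) - 2 * k) * x ^ (2 * k) = x * PP r x := by
  rw [← (Equiv.addRight (1 : ℤ)).tsum_eq, PP, ← tsum_mul_left]
  refine tsum_congr fun k => ?_
  simp only [Equiv.coe_addRight]
  rw [show 2 * ((k + 1) * (k + 1)) - 2 * (k + 1) = 2 * (k * k) + 2 * k by ring,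
    show 2 * (k + 1) = 1 + (2 * k + 1) by ring, zpow_add₀ hx 1, zpow_one]
  ring

theorem summable_PP_shift (r x : ℂ) (hr0 : r ≠ 0) (hr : ‖r‖ < 1) (hx : x ≠ 0) :
    Summable fun k : ℤ => r ^ (2 * (k * k) - 2 * k) * x ^ (2 * k) := by
  rw [← (Equiv.addRight (1 : ℤ)).summable_iff]
  refine ((summable_PP r x hr0 hr hx).mul_left x).congr fun k => ?_
  simp only [Equiv.coe_addRight, Function.comp]
  rw [show 2 * ((k + 1) * (k + 1)) - 2 * (k + 1) = 2 * (k * k) + 2 * k by ring,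
    show 2 * (k + 1) = 1 + (2 * k + 1) by ring, zpow_add₀ hx 1, zpow_one]
  ring

/-- A double sum over `(m, n)`, split by the parity of `m + n`: the even part is parametrized by
`m = k + l`, `n = k - l`, the odd part by `m = k + l + 1`, `n = k - l`. -/
theorem hasSum_parity {f : ℤ × ℤ → ℂ} {a b : ℂ}
    (h₀ : HasSum (fun v : ℤ × ℤ => f (v.1 + v.2, v.1 - v.2)) a)
    (h₁ : HasSum (fun v : ℤ × ℤ => f (v.1 + v.2 + 1, v.1 - v.2)) b) : HasSum f (a + b) := by
  let g₀ : ℤ × ℤ → ℤ × ℤ := fun v => (v.1 + v.2, v.1 - v.2)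
  let g₁ : ℤ × ℤ → ℤ × ℤ := fun v => (v.1 + v.2 + 1, v.1 - v.2)
  have i₀ : Function.Injective g₀ := by
    rintro ⟨a, b⟩ ⟨c, d⟩ h
    simp only [g₀, Prod.mk.injEq] at h ⊢
    lia
  have i₁ : Function.Injective g₁ := by
    rintro ⟨a, b⟩ ⟨c, d⟩ h
    simp only [g₁, Prod.mk.injEq] at h ⊢
    lia
  have hcompl : IsCompl (Set.range g₀) (Set.range g₁) := by
    refine ⟨Set.disjoint_left.mpr ?_, codisjoint_iff.mpr (Set.eq_univ_of_forall ?_)⟩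
    · rintro _ ⟨⟨a, b⟩, rfl⟩ ⟨⟨c, d⟩, h⟩
      simp only [g₀, g₁, Prod.mk.injEq] at h
      lia
    · rintro ⟨m, n⟩
      rcases Int.even_or_odd' (m + n) with ⟨k, hk | hk⟩
      · exact Or.inl ⟨(k, m - k), by simp only [g₀, Prod.mk.injEq]; lia⟩
      · exact Or.inr ⟨(k, m - k - 1), by simp only [g₁, Prod.mk.injEq]; lia⟩
  exact HasSum.add_isCompl hcompl (i₀.hasSum_range_iff.mpr h₀) (i₁.hasSum_range_iff.mpr h₁)

theorem hasSum_mul {f g : ℤ → ℂ} (hf : Summable f) (hg : Summable g) :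
    HasSum (fun v : ℤ × ℤ => f v.1 * g v.2) ((∑' n, f n) * ∑' n, g n) := by
  rw [tsum_mul_tsum_of_summable_norm hf.norm hg.norm]
  exact (summable_mul_of_summable_norm hf.norm hg.norm).hasSum

/-- The product is `x` times the determinant of the vectors `(P, F)` at `x` and at `y`. -/
theorem Th_mul (r x y : ℂ) (hr0 : r ≠ 0) (hr : ‖r‖ < 1) (hx : x ≠ 0) (hy : y ≠ 0) :
    Th r (x * y) * Th r (x / y) = x * (PP r x * FF r y - FF r x * PP r y) := by
  have S := hasSum_mul (summable_Th r (x * y) hr0 hr (mul_ne_zero hx hy))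
    (summable_Th r (x / y) hr0 hr (div_ne_zero hx hy))
  have h₀ := hasSum_mul (summable_PP_shift r x hr0 hr hx) (summable_FF r y hr0 hr hy)
  rw [PP_shift r x hx] at h₀
  have h₁ := (hasSum_mul (summable_FF r x hr0 hr hx) (summable_PP r y hr0 hr hy)).mul_left (-x)
  have hterm : ∀ m n s d : ℤ, m + n = s → m - n = d →
      (r ^ (m * m - m) * (-(x * y)) ^ m) * (r ^ (n * n - n) * (-(x / y)) ^ n) =
      r ^ (m * m - m + (n * n - n)) * (-1) ^ s * x ^ s * y ^ d := by
    rintro m n _ _ rfl rfl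
    rw [neg_eq_neg_one_mul (x * y), neg_eq_neg_one_mul (x / y), mul_zpow, mul_zpow, mul_zpow,
      div_zpow, zpow_add₀ (by norm_num : (-1 : ℂ) ≠ 0), zpow_add₀ hx, zpow_sub₀ hy, zpow_add₀ hr0]
    ring
  have T := S.unique (hasSum_parity (h₀.congr_fun ?_) (h₁.congr_fun ?_))
  · simp only [Th, FF, PP] at T ⊢
    rw [T]
    ring
  · rintro ⟨k, l⟩
    simp only
    rw [hterm _ _ (2 * k) (2 * l) (by ring) (by ring), Even.neg_one_zpow (even_two_mul k),
      show (k + l) * (k + l) - (k + l) + ((k - l) * (k - l) - (k - l)) =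
        (2 * (k * k) - 2 * k) + 2 * (l * l) by ring, zpow_add₀ hr0]
    ring
  · rintro ⟨k, l⟩
    simp only
    rw [hterm _ _ (2 * k + 1) (2 * l + 1) (by ring) (by ring),
      Odd.neg_one_zpow (odd_two_mul_add_one k),
      show (k + l + 1) * (k + l + 1) - (k + l + 1) + ((k - l) * (k - l) - (k - l)) =
        2 * (k * k) + (2 * (l * l) + 2 * l) by ring, zpow_add₀ hr0, zpow_add₀ hx, zpow_one]
    ring

/-! ### The identity for `G` and `H` -/

theorem stmt4 (q : ℂ) (hq : ‖q‖ < 1) :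
    (GG q ^ 2 * HH (q ^ 2) - GG (q ^ 2) * HH q ^ 2) /
        (GG q ^ 2 * HH (q ^ 2) + GG (q ^ 2) * HH q ^ 2) =
      q * HH q * HH (q ^ 2) ^ 2 / (GG q * GG (q ^ 2) ^ 2) := by 
  rcases eq_or_ne q 0 with rfl | hq0
  -- At `q = 0` every product is `1`, and both sides are `0`.
  · simp [GG, HH, qp]
  have hr0 : q ^ 5 ≠ 0 := pow_ne_zero _ hq0
  have hr : ‖q ^ 5‖ < 1 := by
    rw [norm_pow]; exact pow_lt_one₀ (norm_nonneg _) hq (by norm_num)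
  have hp : ‖q ^ 10‖ < 1 := by
    rw [norm_pow]; exact pow_lt_one₀ (norm_nonneg _) hq (by norm_num)
  set L := qp (q ^ 10) (q ^ 10) with hL
  have hL0 : L ≠ 0 := qp_ne_zero hp hp
  have hne : ∀ i : ℕ, i ≠ 0 → qp (q ^ i) (q ^ 10) ≠ 0 := fun i hi =>
    qp_ne_zero hp (by rw [norm_pow]; exact pow_lt_one₀ (norm_nonneg _) hq hi)
  let t : ℕ → ℂ := fun i => qp (q ^ i) (q ^ 10) * qp (q ^ (10 - i)) (q ^ 10)
  have ht0 : ∀ i : ℕ, i ≠ 0 → i < 10 → t i ≠ 0 := fun i hi hi' =>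
    mul_ne_zero (hne i hi) (hne _ (by lia))
  have ht : ∀ i : ℕ, i ≤ 10 → Th (q ^ 5) (q ^ i) = L * t i := by
    intro i hi
    have e : q ^ 10 / q ^ i = q ^ (10 - i) := by rw [pow_sub₀ q hq0 hi, div_eq_mul_inv]
    rw [jacobi_triple _ _ hr0 hr (pow_ne_zero _ hq0), ← pow_mul, e]
  have hsymm : ∀ i : ℕ, i ≤ 10 → t (10 - i) = t i := by
    intro i hi
    simp only [t]
    rw [show 10 - (10 - i) = i by lia, mul_comm]
  let P : ℕ → ℂ := fun i => PP (q ^ 5) (q ^ i)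
  let F : ℕ → ℂ := fun i => FF (q ^ 5) (q ^ i)
  have hD : ∀ i j : ℕ, j ≤ i → i + j ≤ 10 →
      (L * t (i + j)) * (L * t (i - j)) = q ^ i * (P i * F j - F i * P j) := by
    intro i j hij hij'
    rw [← ht _ hij', ← ht _ (by lia), ← Th_mul _ _ _ hr0 hr (pow_ne_zero _ hq0)
      (pow_ne_zero _ hq0), pow_add, pow_sub₀ q hq0 hij, div_eq_mul_inv]
  have d41 := hD 4 1 (by norm_num) (by norm_num)
  have d20 := hD 2 0 (by norm_num) (by norm_num)
  have d42 := hD 4 2 (by norm_num) (by norm_num)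
  have d10 := hD 1 0 (by norm_num) (by norm_num)
  have d40 := hD 4 0 (by norm_num) (by norm_num)
  have d21 := hD 2 1 (by norm_num) (by norm_num)
  have d32 := hD 3 2 (by norm_num) (by norm_num)
  have d30 := hD 3 0 (by norm_num) (by norm_num)
  have d43 := hD 4 3 (by norm_num) (by norm_num)
  norm_num at d41 d20 d42 d10 d40 d21 d32 d30 d43
  have s6 : t 6 = t 4 := hsymm 4 (by norm_num)
  have s7 : t 7 = t 3 := hsymm 3 (by norm_num)
  rw [s6] at d42
  rw [s7] at d43
  have t1 := ht0 1 (by norm_num) (by norm_num)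
  have t2 := ht0 2 (by norm_num) (by norm_num)
  have t3 := ht0 3 (by norm_num) (by norm_num)
  have t4 := ht0 4 (by norm_num) (by norm_num)
  have t5 := ht0 5 (by norm_num) (by norm_num)
  have hG : GG q = 1 / (t 1 * t 4) := by
    rw [GG, qp_split q _ hr, qp_split (q ^ 4) _ hr]
    simp only [t]; ring_nf
  have hH : HH q = 1 / (t 2 * t 3) := by
    rw [HH, qp_split (q ^ 2) _ hr, qp_split (q ^ 3) _ hr]
    simp only [t]; ring_nf
  have hG2 : GG (q ^ 2) = 1 / t 2 := by
    rw [GG]; simp only [t]; ring_nf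
  have hH2 : HH (q ^ 2) = 1 / t 4 := by
    rw [HH]; simp only [t]; ring_nf
  rw [hG, hH, hG2, hH2]
  clear_value t P F L
  generalize t 1 = a1 at *
  generalize t 2 = a2 at *
  generalize t 3 = a3 at *
  generalize t 4 = a4 at *
  generalize t 5 = a5 at *
  -- Plücker relation `D 4 1 * D 2 0 = D 4 0 * D 2 1 + D 4 2 * D 1 0`.
  have A : a5 * a2 ^ 2 * a3 = a1 * a4 * (a3 * a4 + q * a1 * a2) := by
    have m1 := congrArg₂ (· * ·) d41 d20
    have m2 := congrArg₂ (· * ·) d40 d21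
    have m3 := congrArg₂ (· * ·) d42 d10
    apply mul_left_cancel₀ (pow_ne_zero 4 hL0)
    linear_combination m1 - m2 - q * m3
  -- Plücker relation `D 4 0 * D 3 2 = D 4 2 * D 3 0 - D 4 3 * D 2 0`.
  have B : a5 * a1 * a4 ^ 2 = a2 * a3 * (a3 * a4 - q * a1 * a2) := by
    have m1 := congrArg₂ (· * ·) d40 d32
    have m2 := congrArg₂ (· * ·) d42 d30
    have m3 := congrArg₂ (· * ·) d43 d20
    apply mul_left_cancel₀ (pow_ne_zero 4 hL0)
    linear_combination m1 - m2 + q * m3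
  have hsub : (1 / (a1 * a4)) ^ 2 * (1 / a4) - 1 / a2 * (1 / (a2 * a3)) ^ 2 =
      2 * q / (a5 * a2 * a3 * a4 ^ 2) := by
    field_simp
    linear_combination a2 * a3 * A - a1 * a4 * B
  have hadd : (1 / (a1 * a4)) ^ 2 * (1 / a4) + 1 / a2 * (1 / (a2 * a3)) ^ 2 =
      2 / (a5 * a1 * a2 ^ 2 * a4) := by
    field_simp
    linear_combination a2 * a3 * A + a1 * a4 * B
  rw [hsub, hadd]
  field_simp
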